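/- Let σ > 0 and μ ≥ 0 be constants with μσ = 1. Then: (i) for every bounded d ∈ C²([0,∞);ℝ) and every classical solution u of the damped wave system with boundary input d, limsup_{t→+∞} ( max_{x∈[0,1]} |u(t,x)| ) ≤ sup_{t≥0} |d(t)|; and (ii) if γ ≥ 0 is any constant such that limsup_{t→+∞} ( max_{x∈[0,1]} |u(t,x)| ) ≤ γ · sup_{t≥0} |d(t)| holds for every bounded d ∈ C²([0,∞);ℝ) and every classical solution u with boundary input d, then γ ≥ 1. In other words, the asymptotic gain of the displacement in the spatial sup norm equals 1. -/

import Mathlib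

/-!
The condition `μσ = 1` factors the equation: it turns into `∂v/∂t = -μv` for
`v = ∂u/∂t - σ ∂²u/∂x²`, so `u` solves a heat equation with the exponentially decaying forcing
`e^{-μt} v(0,x)`. Comparing `±u` with the barrier `S + A e^{-lt} (2 - x²)`, where `S = sup |d|`,
`l = min(μ, σ/2)` and `A` is large, the parabolic maximum principle gives `|u| ≤ S + 2A e^{-lt}`,
so the gain is at most `1`. The stationary solution `u(t,x) = 1 - x` with input `d = 1` shows
that no smaller gain is possible.
-/

open Real Filter MeasureTheory intervalIntegral Set

noncomputable section

/-- Time derivative ∂u/∂t. -/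
def u_t (u : ℝ → ℝ → ℝ) (t x : ℝ) : ℝ := deriv (fun τ => u τ x) t

/-- Second time derivative ∂²u/∂t². -/
def u_tt (u : ℝ → ℝ → ℝ) (t x : ℝ) : ℝ := deriv (deriv (fun τ => u τ x)) t

/-- Second space derivative ∂²u/∂x². -/
def u_xx (u : ℝ → ℝ → ℝ) (t x : ℝ) : ℝ := deriv (deriv (fun y => u t y)) x

/-- Mixed derivative ∂³u/∂t∂x². -/
def u_txx (u : ℝ → ℝ → ℝ) (t x : ℝ) : ℝ := deriv (deriv (fun y => u_t u t y)) x

/-- A classical solution of the wave equation with Kelvin-Voigt and viscous damping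
with boundary input `d`: `u` is of class `C²`, `x ↦ ∂u/∂t(t,x)` is of class `C²` for
each `t ≥ 0`, the PDE holds for `t ≥ 0`, `x ∈ [0,1]`, and `u(t,0) = d(t)`, `u(t,1) = 0`. -/
def IsClassicalSolution (σ μ : ℝ) (d : ℝ → ℝ) (u : ℝ → ℝ → ℝ) : Prop :=
  ContDiff ℝ 2 (Function.uncurry u) ∧
  (∀ t : ℝ, 0 ≤ t → ContDiff ℝ 2 (fun x => u_t u t x)) ∧
  (∀ t x : ℝ, 0 ≤ t → x ∈ Set.Icc (0:ℝ) 1 →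
    u_tt u t x = u_xx u t x + σ * u_txx u t x - μ * u_t u t x) ∧
  (∀ t : ℝ, 0 ≤ t → u t 0 = d t ∧ u t 1 = 0)

/-- A bounded disturbance of class `C²`. -/
def BddC2 (d : ℝ → ℝ) : Prop :=
  ContDiff ℝ 2 d ∧ ∃ M : ℝ, ∀ t : ℝ, 0 ≤ t → |d t| ≤ M

/-- `sup_{t ≥ 0} |d(t)|`. -/
def supD (d : ℝ → ℝ) : ℝ := sSup {y : ℝ | ∃ t : ℝ, 0 ≤ t ∧ y = |d t|}

/-- `max_{x ∈ [0,1]} |u(t,x)|`, the spatial sup norm of the displacement. -/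
def supNorm (u : ℝ → ℝ → ℝ) (t : ℝ) : ℝ :=
  sSup {y : ℝ | ∃ x ∈ Set.Icc (0:ℝ) 1, y = |u t x|}

/-- `(∫₀¹ u(t,x)² dx)^{1/2}`, the spatial L² norm of the displacement. -/
def L2Norm (u : ℝ → ℝ → ℝ) (t : ℝ) : ℝ := Real.sqrt (∫ x in (0:ℝ)..1, (u t x) ^ 2)

section PartialDerivatives

variable {u v w : ℝ → ℝ → ℝ}

/-- The space derivative `∂u/∂x`. By definition `u_xx u = u_x (u_x u)` and
`u_txx u = u_x (u_x (u_t u))`; the mixed derivative `∂²u/∂x∂t` is written `u_x (u_t u)`. -/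
def u_x (u : ℝ → ℝ → ℝ) (t x : ℝ) : ℝ := deriv (fun y => u t y) x

section Slices

variable {E F G : Type*} [NormedAddCommGroup E] [NormedSpace ℝ E] [NormedAddCommGroup F]
  [NormedSpace ℝ F] [NormedAddCommGroup G] [NormedSpace ℝ G]

lemma hasDerivAt_slice_left {f : ℝ × F → G} {t : ℝ} {x : F} (hf : DifferentiableAt ℝ f (t, x)) :
    HasDerivAt (fun τ => f (τ, x)) (fderiv ℝ f (t, x) (1, 0)) t :=
  hf.hasFDerivAt.comp_hasDerivAt t ((hasDerivAt_id t).prodMk (hasDerivAt_const t x))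

lemma hasDerivAt_slice_right {f : E × ℝ → G} {t : E} {x : ℝ} (hf : DifferentiableAt ℝ f (t, x)) :
    HasDerivAt (fun y => f (t, y)) (fderiv ℝ f (t, x) (0, 1)) x :=
  hf.hasFDerivAt.comp_hasDerivAt x ((hasDerivAt_const x t).prodMk (hasDerivAt_id x))

end Slices

lemma uncurry_u_t_eq_fderiv (hu : Differentiable ℝ (Function.uncurry u)) :
    Function.uncurry (u_t u) = fun p => fderiv ℝ (Function.uncurry u) p (1, 0) :=
  funext fun p => (hasDerivAt_slice_left (hu p)).deriv

lemma uncurry_u_x_eq_fderiv (hu : Differentiable ℝ (Function.uncurry u)) :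
    Function.uncurry (u_x u) = fun p => fderiv ℝ (Function.uncurry u) p (0, 1) :=
  funext fun p => (hasDerivAt_slice_right (hu p)).deriv

lemma hasDerivAt_u_t (hu : Differentiable ℝ (Function.uncurry u)) (t x : ℝ) :
    HasDerivAt (fun τ => u τ x) (u_t u t x) t :=
  (hasDerivAt_slice_left (hu (t, x))).differentiableAt.hasDerivAt

lemma hasDerivAt_u_x (hu : Differentiable ℝ (Function.uncurry u)) (t x : ℝ) :
    HasDerivAt (fun y => u t y) (u_x u t x) x :=
  (hasDerivAt_slice_right (hu (t, x))).differentiableAt.hasDerivAt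

lemma contDiff_u_t {n : WithTop ℕ∞} (hu : ContDiff ℝ (n + 1) (Function.uncurry u)) :
    ContDiff ℝ n (Function.uncurry (u_t u)) := by
  rw [uncurry_u_t_eq_fderiv (hu.differentiable (by simp))]
  exact (hu.fderiv_right le_rfl).clm_apply contDiff_const

lemma contDiff_u_x {n : WithTop ℕ∞} (hu : ContDiff ℝ (n + 1) (Function.uncurry u)) :
    ContDiff ℝ n (Function.uncurry (u_x u)) := by
  rw [uncurry_u_x_eq_fderiv (hu.differentiable (by simp))]
  exact (hu.fderiv_right le_rfl).clm_apply contDiff_const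

lemma continuous_u_tt (hu : ContDiff ℝ 2 (Function.uncurry u)) :
    Continuous (Function.uncurry (u_tt u)) :=
  (contDiff_u_t (n := 0) (contDiff_u_t (n := 1) hu)).continuous

lemma continuous_u_xx (hu : ContDiff ℝ 2 (Function.uncurry u)) :
    Continuous (Function.uncurry (u_xx u)) :=
  (contDiff_u_x (n := 0) (contDiff_u_x (n := 1) hu)).continuous

lemma differentiable_u_t (hu : ContDiff ℝ 2 (Function.uncurry u)) :
    Differentiable ℝ (Function.uncurry (u_t u)) :=
  (contDiff_u_t (n := 1) hu).differentiable one_ne_zero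

lemma differentiable_u_x (hu : ContDiff ℝ 2 (Function.uncurry u)) :
    Differentiable ℝ (Function.uncurry (u_x u)) :=
  (contDiff_u_x (n := 1) hu).differentiable one_ne_zero

lemma u_t_u_x_comm (hu : ContDiff ℝ 2 (Function.uncurry u)) (t x : ℝ) :
    u_t (u_x u) t x = u_x (u_t u) t x := by
  have hd : Differentiable ℝ (Function.uncurry u) := hu.differentiable two_ne_zero
  have hdd : DifferentiableAt ℝ (fderiv ℝ (Function.uncurry u)) (t, x) :=
    (hu.fderiv_right (m := 1) le_rfl).differentiable one_ne_zero (t, x)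
  have h_tx : u_t (u_x u) t x =
      fderiv ℝ (fderiv ℝ (Function.uncurry u)) (t, x) (1, 0) (0, 1) := by
    have h := (hasDerivAt_slice_left hdd).clm_apply (hasDerivAt_const t ((0 : ℝ), (1 : ℝ)))
    simp only [← congrFun (uncurry_u_x_eq_fderiv hd) _, map_zero, add_zero] at h
    exact h.deriv
  have h_xt : u_x (u_t u) t x =
      fderiv ℝ (fderiv ℝ (Function.uncurry u)) (t, x) (0, 1) (1, 0) := by
    have h := (hasDerivAt_slice_right hdd).clm_apply (hasDerivAt_const x ((1 : ℝ), (0 : ℝ)))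
    simp only [← congrFun (uncurry_u_t_eq_fderiv hd) _, map_zero, add_zero] at h
    exact h.deriv
  rw [h_tx, h_xt]
  exact hu.contDiffAt.isSymmSndFDerivAt (by simp) (1, 0) (0, 1)

lemma u_t_sub (hv : Differentiable ℝ (Function.uncurry v))
    (hw : Differentiable ℝ (Function.uncurry w)) : u_t (v - w) = u_t v - u_t w :=
  funext₂ fun t x => ((hasDerivAt_u_t hv t x).sub (hasDerivAt_u_t hw t x)).deriv

lemma u_x_sub (hv : Differentiable ℝ (Function.uncurry v))
    (hw : Differentiable ℝ (Function.uncurry w)) : u_x (v - w) = u_x v - u_x w :=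
  funext₂ fun t x => ((hasDerivAt_u_x hv t x).sub (hasDerivAt_u_x hw t x)).deriv

lemma u_t_neg (u : ℝ → ℝ → ℝ) : u_t (-u) = -u_t u :=
  funext₂ fun _ _ => deriv.fun_neg

lemma u_x_neg (u : ℝ → ℝ → ℝ) : u_x (-u) = -u_x u :=
  funext₂ fun _ _ => deriv.fun_neg

end PartialDerivatives

section HeatOperator

/-- The heat operator `∂u/∂t - σ ∂²u/∂x²` with diffusivity `σ`. -/
def heatOp (σ : ℝ) (u : ℝ → ℝ → ℝ) (t x : ℝ) : ℝ := u_t u t x - σ * u_xx u t x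

variable {σ : ℝ} {u v w q : ℝ → ℝ → ℝ}

lemma continuous_heatOp (hu : ContDiff ℝ 2 (Function.uncurry u)) :
    Continuous (Function.uncurry (heatOp σ u)) :=
  (differentiable_u_t hu).continuous.sub ((continuous_u_xx hu).const_mul σ)

lemma heatOp_sub (hv : ContDiff ℝ 2 (Function.uncurry v))
    (hw : ContDiff ℝ 2 (Function.uncurry w)) (t x : ℝ) :
    heatOp σ (v - w) t x = heatOp σ v t x - heatOp σ w t x := by
  have hv' := hv.differentiable two_ne_zero
  have hw' := hw.differentiable two_ne_zero
  have hxx : u_xx (v - w) = u_xx v - u_xx w := by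
    change u_x (u_x (v - w)) = u_x (u_x v) - u_x (u_x w)
    rw [u_x_sub hv' hw', u_x_sub (differentiable_u_x hv) (differentiable_u_x hw)]
  simp only [heatOp, u_t_sub hv' hw', hxx, Pi.sub_apply]
  ring

lemma heatOp_neg (u : ℝ → ℝ → ℝ) (t x : ℝ) : heatOp σ (-u) t x = -heatOp σ u t x := by
  have hxx : u_xx (-u) = -u_xx u := by
    change u_x (u_x (-u)) = -u_x (u_x u)
    rw [u_x_neg, u_x_neg]
  simp only [heatOp, u_t_neg, hxx, Pi.neg_apply]
  ring

lemma deriv_deriv_nonneg_of_isLocalMin {f : ℝ → ℝ} {x : ℝ} (hf : IsLocalMin f x)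
    (hc : ContinuousAt f x) : 0 ≤ deriv (deriv f) x := by
  by_contra! hneg
  -- A negative second derivative makes `x` also a local maximum, so `f` is locally constant.
  have hmax : IsLocalMax f x := isLocalMax_of_deriv_deriv_neg hneg hf.deriv_eq_zero hc
  have hconst : f =ᶠ[nhds x] fun _ => f x := by
    filter_upwards [hf, hmax] with y hle hge using le_antisymm hge hle
  have hzero : deriv (deriv f) x = 0 := by
    rw [hconst.deriv.deriv_eq, deriv_const', deriv_const]
  exact hneg.ne hzero

lemma nonpos_of_isMinOn_Icc_right {f : ℝ → ℝ} {f' a b : ℝ} (hab : a < b)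
    (hmin : IsMinOn f (Icc a b) b) (hf : HasDerivWithinAt f f' (Icc a b) b) : f' ≤ 0 := by
  have hcone : a - b ∈ posTangentConeAt (Icc a b) b :=
    sub_mem_posTangentConeAt_of_segment_subset
      ((convex_Icc a b).segment_subset (right_mem_Icc.2 hab.le) (left_mem_Icc.2 hab.le))
  have hnonneg := hmin.localize.hasFDerivWithinAt_nonneg hf.hasFDerivWithinAt hcone
  rw [ContinuousLinearMap.toSpanSingleton_apply, smul_eq_mul] at hnonneg
  nlinarith

variable {t₀ a b : ℝ}

lemma heatOp_nonpos_of_isMinOn (hσ : 0 ≤ σ) (hq : Differentiable ℝ (Function.uncurry q)) {s y : ℝ}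
    (hs : t₀ < s) (hy : y ∈ Ioo a b)
    (hmin : IsMinOn (Function.uncurry q) (Icc t₀ s ×ˢ Icc a b) (s, y)) :
    heatOp σ q s y ≤ 0 := by
  have htime : u_t q s y ≤ 0 := by
    refine nonpos_of_isMinOn_Icc_right hs (fun r hr => ?_) (hasDerivAt_u_t hq s y).hasDerivWithinAt
    exact hmin (mk_mem_prod hr (Ioo_subset_Icc_self hy))
  have hspace : 0 ≤ u_xx q s y := by
    refine deriv_deriv_nonneg_of_isLocalMin ?_ (hasDerivAt_u_x hq s y).continuousAt
    filter_upwards [Icc_mem_nhds hy.1 hy.2] with z hz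
    exact hmin (mk_mem_prod (right_mem_Icc.2 hs.le) hz)
  exact sub_nonpos.2 (htime.trans (mul_nonneg hσ hspace))

lemma pos_of_heatOp_pos (hσ : 0 ≤ σ) (hq : Differentiable ℝ (Function.uncurry q))
    (hinit : ∀ x ∈ Icc a b, 0 < q t₀ x) (hleft : ∀ t, t₀ ≤ t → 0 < q t a)
    (hright : ∀ t, t₀ ≤ t → 0 < q t b)
    (hheat : ∀ t, t₀ < t → ∀ x ∈ Ioo a b, 0 < heatOp σ q t x)
    {t x : ℝ} (ht : t₀ ≤ t) (hx : x ∈ Icc a b) : 0 < q t x := by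
  obtain ⟨⟨s, y⟩, ⟨hs, hy⟩, hmin⟩ := (isCompact_Icc.prod isCompact_Icc).exists_isMinOn
    ⟨(t, x), mk_mem_prod (right_mem_Icc.2 ht) hx⟩ hq.continuous.continuousOn
  have hle : q s y ≤ q t x := hmin (mk_mem_prod (right_mem_Icc.2 ht) hx)
  suffices 0 < q s y from this.trans_le hle
  rcases hs.1.eq_or_lt with rfl | hs₀
  · exact hinit y hy
  rcases hy.1.eq_or_lt with rfl | hya
  · exact hleft s hs.1
  rcases hy.2.eq_or_lt with rfl | hyb
  · exact hright s hs.1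
  have hmin_s : IsMinOn (Function.uncurry q) (Icc t₀ s ×ˢ Icc a b) (s, y) :=
    hmin.on_subset (prod_mono_left (Icc_subset_Icc_right hs.2))
  exact absurd (hheat s hs₀ y ⟨hya, hyb⟩)
    (heatOp_nonpos_of_isMinOn hσ hq hs₀ ⟨hya, hyb⟩ hmin_s).not_gt

theorem lt_of_heatOp_lt (hσ : 0 ≤ σ) (hv : ContDiff ℝ 2 (Function.uncurry v))
    (hw : ContDiff ℝ 2 (Function.uncurry w)) (hinit : ∀ x ∈ Icc a b, w t₀ x < v t₀ x)
    (hleft : ∀ t, t₀ ≤ t → w t a < v t a) (hright : ∀ t, t₀ ≤ t → w t b < v t b)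
    (hheat : ∀ t, t₀ < t → ∀ x ∈ Ioo a b, heatOp σ w t x < heatOp σ v t x)
    {t x : ℝ} (ht : t₀ ≤ t) (hx : x ∈ Icc a b) : w t x < v t x := by
  refine sub_pos.1 (pos_of_heatOp_pos (q := v - w) hσ
    ((hv.sub hw).differentiable two_ne_zero) (fun y hy => sub_pos.2 (hinit y hy))
    (fun s hs => sub_pos.2 (hleft s hs)) (fun s hs => sub_pos.2 (hright s hs))
    (fun s hs y hy => ?_) ht hx)
  rw [heatOp_sub hv hw]
  exact sub_pos.2 (hheat s hs y hy)

end HeatOperator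

section Barrier

/-- The barrier `S + A e^{-lt} (2 - x²)` dominating solutions of the heat equation on `[0,1]` with
boundary values at most `S` and exponentially decaying forcing. -/
def decayBarrier (S A l t x : ℝ) : ℝ := S + A * exp (-(l * t)) * (2 - x ^ 2)

variable {σ S A l : ℝ} {w : ℝ → ℝ → ℝ}

lemma contDiff_decayBarrier {n : WithTop ℕ∞} :
    ContDiff ℝ n (Function.uncurry (decayBarrier S A l)) := by
  unfold decayBarrier Function.uncurry
  fun_prop

lemma heatOp_decayBarrier (t x : ℝ) :
    heatOp σ (decayBarrier S A l) t x = A * exp (-(l * t)) * (2 * σ - l * (2 - x ^ 2)) := by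
  have htime : u_t (decayBarrier S A l) t x = A * (exp (-(l * t)) * -(l * 1)) * (2 - x ^ 2) :=
    (((((hasDerivAt_id t).const_mul l).neg.exp.const_mul A).mul_const _).const_add S).deriv
  have hspace (y : ℝ) : u_x (decayBarrier S A l) t y = A * exp (-(l * t)) * -(2 * y) := by
    have h : HasDerivAt (fun z : ℝ => 2 - z ^ 2) (-(2 * y)) y := by
      simpa using (hasDerivAt_pow 2 y).const_sub 2
    exact ((h.const_mul _).const_add S).deriv
  have hspace₂ : u_xx (decayBarrier S A l) t x = A * exp (-(l * t)) * -(2 * 1) := by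
    change deriv (u_x (decayBarrier S A l) t) x = _
    rw [funext hspace]
    exact ((((hasDerivAt_id x).const_mul 2).neg).const_mul _).deriv
  rw [heatOp, htime, hspace₂]
  ring

lemma lt_decayBarrier (hσ : 0 ≤ σ) (hA : 0 < A) (hl : l ≤ σ / 2)
    (hw : ContDiff ℝ 2 (Function.uncurry w)) (hinit : ∀ x ∈ Icc (0 : ℝ) 1, w 0 x < S + A)
    (hleft : ∀ t, 0 ≤ t → w t 0 ≤ S) (hright : ∀ t, 0 ≤ t → w t 1 ≤ S)
    (hheat : ∀ t, 0 < t → ∀ x ∈ Ioo (0 : ℝ) 1, heatOp σ w t x < A * σ * exp (-(l * t)))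
    {t x : ℝ} (ht : 0 ≤ t) (hx : x ∈ Icc (0 : ℝ) 1) : w t x < decayBarrier S A l t x := by
  have hAexp (s : ℝ) : 0 < A * exp (-(l * s)) := by positivity
  have hsq {y : ℝ} (hy : y ∈ Icc (0 : ℝ) 1) : y ^ 2 ≤ 1 := pow_le_one₀ hy.1 hy.2
  have hbdry {y : ℝ} (hy : y ∈ Icc (0 : ℝ) 1) (s : ℝ) : S < decayBarrier S A l s y :=
    lt_add_of_pos_right S (mul_pos (hAexp s) (by linarith [hsq hy]))
  refine lt_of_heatOp_lt hσ contDiff_decayBarrier hw (fun y hy => ?_)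
    (fun s hs => (hleft s hs).trans_lt (hbdry (left_mem_Icc.2 zero_le_one) s))
    (fun s hs => (hright s hs).trans_lt (hbdry (right_mem_Icc.2 zero_le_one) s))
    (fun s hs y hy => ?_) ht hx
  · refine (hinit y hy).trans_le ?_
    rw [decayBarrier, mul_zero, neg_zero, exp_zero, mul_one]
    nlinarith [hsq hy]
  · have hrate : l * (2 - y ^ 2) ≤ σ := by
      have hy2 := hsq (Ioo_subset_Icc_self hy)
      nlinarith [mul_le_mul_of_nonneg_right hl (by linarith : 0 ≤ 2 - y ^ 2), sq_nonneg y]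
    calc heatOp σ w s y < A * σ * exp (-(l * s)) := hheat s hs y hy
      _ = A * exp (-(l * s)) * σ := by ring
      _ ≤ A * exp (-(l * s)) * (2 * σ - l * (2 - y ^ 2)) :=
        mul_le_mul_of_nonneg_left (by linarith) (hAexp s).le
      _ = heatOp σ (decayBarrier S A l) s y := (heatOp_decayBarrier s y).symm

theorem abs_le_add_exp_of_heatOp_bound (hσ : 0 ≤ σ) (hA : 0 < A) (hl : l ≤ σ / 2)
    (hw : ContDiff ℝ 2 (Function.uncurry w)) (hinit : ∀ x ∈ Icc (0 : ℝ) 1, |w 0 x| < S + A)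
    (hleft : ∀ t, 0 ≤ t → |w t 0| ≤ S) (hright : ∀ t, 0 ≤ t → |w t 1| ≤ S)
    (hheat : ∀ t, 0 < t → ∀ x ∈ Ioo (0 : ℝ) 1, |heatOp σ w t x| < A * σ * exp (-(l * t)))
    {t x : ℝ} (ht : 0 ≤ t) (hx : x ∈ Icc (0 : ℝ) 1) :
    |w t x| ≤ S + 2 * A * exp (-(l * t)) := by
  have hupper : w t x < decayBarrier S A l t x :=
    lt_decayBarrier hσ hA hl hw (fun y hy => (le_abs_self _).trans_lt (hinit y hy))
      (fun s hs => (le_abs_self _).trans (hleft s hs))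
      (fun s hs => (le_abs_self _).trans (hright s hs))
      (fun s hs y hy => (le_abs_self _).trans_lt (hheat s hs y hy)) ht hx
  have hlower : (-w) t x < decayBarrier S A l t x := by
    refine lt_decayBarrier (w := -w) hσ hA hl hw.neg
      (fun y hy => (neg_le_abs _).trans_lt (hinit y hy))
      (fun s hs => (neg_le_abs _).trans (hleft s hs))
      (fun s hs => (neg_le_abs _).trans (hright s hs)) (fun s hs y hy => ?_) ht hx
    rw [heatOp_neg]
    exact (neg_le_abs _).trans_lt (hheat s hs y hy)
  have hbarrier : decayBarrier S A l t x ≤ S + 2 * A * exp (-(l * t)) := by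
    have : 0 ≤ A * exp (-(l * t)) * x ^ 2 := by positivity
    rw [decayBarrier]
    linarith
  exact (max_lt hupper hlower).le.trans hbarrier

end Barrier

section MixedThirdDerivative

variable {u g : ℝ → ℝ → ℝ} {U : Set ℝ} {t₀ : ℝ}

lemma hasDerivAt_integral_of_continuous {E : Type*} [NormedAddCommGroup E] [NormedSpace ℝ E]
    {F F' : ℝ → ℝ → E} {a b x : ℝ} (hU : U ∈ nhds x)
    (hF : Continuous (Function.uncurry F)) (hF' : Continuous (Function.uncurry F'))
    (hd : ∀ s ∈ uIcc a b, ∀ y ∈ U, HasDerivAt (F s) (F' s y) y) :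
    HasDerivAt (fun y => ∫ s in a..b, F s y) (∫ s in a..b, F' s x) x := by
  obtain ⟨K, hK, hKU, hKc⟩ := local_compact_nhds hU
  obtain ⟨C, hC⟩ := (isCompact_uIcc.prod hKc).exists_bound_of_continuousOn
    (s := uIcc a b ×ˢ K) hF'.continuousOn
  refine (intervalIntegral.hasDerivAt_integral_of_dominated_loc_of_deriv_le (bound := fun _ => C)
    (F := fun y s => F s y) (F' := fun y s => F' s y) hK
    (Eventually.of_forall fun y => (hF.comp (Continuous.prodMk_left y)).aestronglyMeasurable)
    ((hF.comp (Continuous.prodMk_left x)).intervalIntegrable _ _)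
    (hF'.comp (Continuous.prodMk_left x)).aestronglyMeasurable ?_ intervalIntegrable_const ?_).2
  · exact Eventually.of_forall fun s hs y hy => hC (s, y) (mk_mem_prod (uIoc_subset_uIcc hs) hy)
  · exact Eventually.of_forall fun s hs y hy => hd s (uIoc_subset_uIcc hs) y (hKU hy)

lemma u_xx_eq_add_integral (hu : ContDiff ℝ 2 (Function.uncurry u))
    (hg : Continuous (Function.uncurry g)) {t x : ℝ} (hU : U ∈ nhds x)
    (hd : ∀ s ∈ uIcc t₀ t, ∀ y ∈ U, HasDerivAt (u_x (u_t u) s) (g s y) y) :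
    u_xx u t x = u_xx u t₀ x + ∫ s in t₀..t, g s x := by
  have hcont : Continuous (Function.uncurry (u_x (u_t u))) :=
    (contDiff_u_x (n := 0) (contDiff_u_t (n := 1) hu)).continuous
  have hint (y : ℝ) : u_x u t y = u_x u t₀ y + ∫ s in t₀..t, u_x (u_t u) s y := by
    rw [integral_eq_sub_of_hasDerivAt (f := fun s => u_x u s y), add_sub_cancel]
    · exact fun s _ => u_t_u_x_comm hu s y ▸ hasDerivAt_u_t (differentiable_u_x hu) s y
    · exact (hcont.comp (Continuous.prodMk_left y)).intervalIntegrable _ _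
  have hderiv : HasDerivAt (u_x u t) (u_xx u t₀ x + ∫ s in t₀..t, g s x) x := by
    rw [funext hint]
    exact (hasDerivAt_u_x (differentiable_u_x hu) t₀ x).add
      (hasDerivAt_integral_of_continuous hU hcont hg hd)
  exact hderiv.deriv

lemma hasDerivWithinAt_u_xx_of_hasDerivAt (hu : ContDiff ℝ 2 (Function.uncurry u))
    (hg : Continuous (Function.uncurry g)) {t x : ℝ} (hU : U ∈ nhds x)
    (hd : ∀ s, t₀ ≤ s → ∀ y ∈ U, HasDerivAt (u_x (u_t u) s) (g s y) y) (ht : t₀ ≤ t) :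
    HasDerivWithinAt (fun s => u_xx u s x) (g t x) (Ici t₀) t := by
  have hint (s : ℝ) (hs : s ∈ Ici t₀) : u_xx u s x = u_xx u t₀ x + ∫ r in t₀..s, g r x :=
    u_xx_eq_add_integral hu hg hU fun r hr => hd r (by rw [uIcc_of_le hs] at hr; exact hr.1)
  have hgx : Continuous fun s => g s x := hg.comp (Continuous.prodMk_left x)
  exact ((hgx.integral_hasStrictDerivAt t₀ t).hasDerivAt.const_add _).hasDerivWithinAt.congr
    hint (hint t ht)

end MixedThirdDerivative

lemma eq_exp_smul_of_hasDerivWithinAt {E : Type*} [NormedAddCommGroup E] [NormedSpace ℝ E]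
    {f : ℝ → E} {c : ℝ} (hf : ∀ t, 0 ≤ t → HasDerivWithinAt f (c • f t) (Ici 0) t)
    {t : ℝ} (ht : 0 ≤ t) : f t = exp (c * t) • f 0 := by
  have hderiv (s : ℝ) (hs : 0 ≤ s) :
      HasDerivWithinAt (fun s => exp (-(c * s)) • f s) 0 (Ici 0) s := by
    have hexp := ((hasDerivAt_id s).const_mul c).neg.exp.hasDerivWithinAt (s := Ici 0)
    refine (hexp.smul (hf s hs)).congr_deriv ?_
    simp only [id, mul_one, mul_neg, neg_smul, smul_smul, add_neg_cancel]
  have hconst : exp (-(c * t)) • f t = exp (-(c * 0)) • f 0 :=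
    constant_of_has_deriv_right_zero
      (fun s hs => ((hderiv s hs.1).continuousWithinAt).mono Icc_subset_Ici_self)
      (fun s hs => (hderiv s hs.1).mono (Ici_subset_Ici.2 hs.1)) t ⟨ht, le_rfl⟩
  rw [mul_zero, neg_zero, exp_zero, one_smul] at hconst
  rw [← hconst, smul_smul, ← exp_add, add_neg_cancel, exp_zero, one_smul]

namespace IsClassicalSolution

variable {σ μ : ℝ} {d : ℝ → ℝ} {u : ℝ → ℝ → ℝ}

lemma hasDerivWithinAt_u_xx (hσ : σ ≠ 0) (hu : IsClassicalSolution σ μ d u) {t x : ℝ}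
    (ht : 0 ≤ t) (hx : x ∈ Ioo (0 : ℝ) 1) :
    HasDerivWithinAt (fun s => u_xx u s x) (u_txx u t x) (Ici 0) t := by
  obtain ⟨hC2, hslice, hpde, -⟩ := hu
  -- `u_txx u` is only known to be continuous in `x`; the wave equation identifies it on
  -- `[0,∞) × [0,1]` with a jointly continuous function.
  set g : ℝ → ℝ → ℝ := fun s y => (u_tt u s y - u_xx u s y + μ * u_t u s y) / σ with hg_def
  have hg : Continuous (Function.uncurry g) :=
    (((continuous_u_tt hC2).sub (continuous_u_xx hC2)).add
      ((differentiable_u_t hC2).continuous.const_mul μ)).div_const σ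
  have hg_eq (s : ℝ) (hs : 0 ≤ s) (y : ℝ) (hy : y ∈ Ioo (0 : ℝ) 1) : u_txx u s y = g s y := by
    rw [hg_def, eq_div_iff hσ]
    linear_combination -(hpde s y hs (Ioo_subset_Icc_self hy))
  rw [hg_eq t ht x hx]
  refine hasDerivWithinAt_u_xx_of_hasDerivAt hC2 hg (isOpen_Ioo.mem_nhds hx)
    (fun s hs y hy => ?_) ht
  rw [← hg_eq s hs y hy]
  exact ((hslice s hs).differentiable_deriv_two y).hasDerivAt

theorem heatOp_eq_exp_mul (hμσ : μ * σ = 1) (hu : IsClassicalSolution σ μ d u) {t x : ℝ}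
    (ht : 0 ≤ t) (hx : x ∈ Ioo (0 : ℝ) 1) :
    heatOp σ u t x = exp (-μ * t) * heatOp σ u 0 x := by
  refine eq_exp_smul_of_hasDerivWithinAt (f := fun s => heatOp σ u s x) (fun s hs => ?_) ht
  have hut : HasDerivWithinAt (fun τ => u_t u τ x) (u_tt u s x) (Ici 0) s :=
    (hasDerivAt_u_t (differentiable_u_t hu.1) s x).hasDerivWithinAt
  have huxx := hu.hasDerivWithinAt_u_xx (right_ne_zero_of_mul_eq_one hμσ) hs hx
  refine (hut.sub (huxx.const_mul σ)).congr_deriv ?_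
  rw [smul_eq_mul, heatOp]
  linear_combination hu.2.2.1 s x hs (Ioo_subset_Icc_self hx) - u_xx u s x * hμσ

theorem exists_abs_le_add_exp {S : ℝ} (hσ : 0 < σ) (hμσ : μ * σ = 1)
    (hu : IsClassicalSolution σ μ d u) (hS : ∀ t, 0 ≤ t → |d t| ≤ S) :
    ∃ A l : ℝ, 0 < l ∧ ∀ t, 0 ≤ t → ∀ x ∈ Icc (0 : ℝ) 1,
      |u t x| ≤ S + 2 * A * exp (-(l * t)) := by
  have hμ : 0 < μ := pos_of_mul_pos_left (hμσ ▸ one_pos) hσ.le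
  have hS₀ : 0 ≤ S := (abs_nonneg _).trans (hS 0 le_rfl)
  have hbdry := hu.2.2.2
  have hslice : Continuous fun x : ℝ => ((0 : ℝ), x) := Continuous.prodMk_right 0
  obtain ⟨M, hM⟩ := (isCompact_Icc (a := (0 : ℝ)) (b := 1)).exists_bound_of_continuousOn
    (hu.1.continuous.comp hslice).continuousOn
  obtain ⟨V, hV⟩ := (isCompact_Icc (a := (0 : ℝ)) (b := 1)).exists_bound_of_continuousOn
    ((continuous_heatOp (σ := σ) hu.1).comp hslice).continuousOn
  obtain ⟨A, hA⟩ := exists_gt (max 0 (max M (V / σ)))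
  obtain ⟨hA₀, hMA, hVA⟩ : 0 < A ∧ M < A ∧ V < A * σ := by
    simpa only [max_lt_iff, div_lt_iff₀ hσ] using hA
  refine ⟨A, min μ (σ / 2), lt_min hμ (half_pos hσ), fun t ht x hx =>
    abs_le_add_exp_of_heatOp_bound hσ.le hA₀ (min_le_right _ _) hu.1 (fun y hy => ?_)
      (fun s hs => ?_) (fun s hs => ?_) (fun s hs y hy => ?_) ht hx⟩
  · exact (hM y hy).trans_lt (by linarith)
  · exact (hbdry s hs).1 ▸ hS s hs
  · rwa [(hbdry s hs).2, abs_zero]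
  · calc |heatOp σ u s y| = exp (-μ * s) * |heatOp σ u 0 y| := by
          rw [hu.heatOp_eq_exp_mul hμσ hs.le hy, abs_mul, abs_exp]
      _ ≤ exp (-μ * s) * V := by gcongr; exact hV y (Ioo_subset_Icc_self hy)
      _ < exp (-μ * s) * (A * σ) := by gcongr
      _ ≤ exp (-(min μ (σ / 2) * s)) * (A * σ) := by
          rw [neg_mul]
          gcongr
          exact min_le_left _ _
      _ = A * σ * exp (-(min μ (σ / 2) * s)) := mul_comm _ _

end IsClassicalSolution

lemma supNorm_nonneg (u : ℝ → ℝ → ℝ) (t : ℝ) : 0 ≤ supNorm u t :=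
  Real.sSup_nonneg (by rintro _ ⟨x, -, rfl⟩; exact abs_nonneg _)

lemma supNorm_le {u : ℝ → ℝ → ℝ} {t C : ℝ} (h : ∀ x ∈ Icc (0 : ℝ) 1, |u t x| ≤ C) :
    supNorm u t ≤ C :=
  csSup_le ⟨_, 0, left_mem_Icc.2 zero_le_one, rfl⟩ (by rintro _ ⟨x, hx, rfl⟩; exact h x hx)

lemma BddC2.abs_le_supD {d : ℝ → ℝ} (hd : BddC2 d) {t : ℝ} (ht : 0 ≤ t) : |d t| ≤ supD d := by
  obtain ⟨-, M, hM⟩ := hd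
  exact le_csSup ⟨M, by rintro _ ⟨s, hs, rfl⟩; exact hM s hs⟩ ⟨t, ht, rfl⟩

theorem IsClassicalSolution.limsup_supNorm_le {σ μ S : ℝ} {d : ℝ → ℝ} {u : ℝ → ℝ → ℝ}
    (hσ : 0 < σ) (hμσ : μ * σ = 1) (hu : IsClassicalSolution σ μ d u)
    (hS : ∀ t, 0 ≤ t → |d t| ≤ S) : limsup (fun t => supNorm u t) atTop ≤ S := by
  obtain ⟨A, l, hl, hbound⟩ := hu.exists_abs_le_add_exp hσ hμσ hS
  have hle : ∀ᶠ t in atTop, supNorm u t ≤ S + 2 * A * exp (-(l * t)) := by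
    filter_upwards [eventually_ge_atTop 0] with t ht using supNorm_le (hbound t ht)
  have hlim : Tendsto (fun t => S + 2 * A * exp (-(l * t))) atTop (nhds S) := by
    have hexp : Tendsto (fun t => exp (-(l * t))) atTop (nhds 0) :=
      tendsto_exp_neg_atTop_nhds_zero.comp (tendsto_id.const_mul_atTop hl)
    simpa only [mul_zero, add_zero] using (hexp.const_mul (2 * A)).const_add S
  have hcobdd : IsCoboundedUnder (· ≤ ·) atTop (fun t => supNorm u t) :=
    (isBoundedUnder_of ⟨0, supNorm_nonneg u⟩).isCoboundedUnder_le
  exact (limsup_le_limsup hle hcobdd hlim.isBoundedUnder_le).trans hlim.limsup_eq.le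

lemma isClassicalSolution_one_sub (σ μ : ℝ) :
    IsClassicalSolution σ μ (fun _ => 1) (fun _ x => 1 - x) := by
  have ht : u_t (fun _ x : ℝ => 1 - x) = fun _ _ => 0 := funext₂ fun _ _ => deriv_const _ _
  refine ⟨contDiff_const.sub contDiff_snd, fun t _ => ?_, fun t x _ _ => ?_, fun t _ => by simp⟩
  · rw [ht]
    exact contDiff_const
  · simp [u_tt, u_xx, u_txx, ht]

lemma supNorm_one_sub (t : ℝ) : supNorm (fun _ x => 1 - x) t = 1 := by
  refine IsGreatest.csSup_eq ⟨⟨0, by simp, by simp⟩, ?_⟩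
  rintro _ ⟨x, hx, rfl⟩
  rw [abs_of_nonneg (sub_nonneg.2 hx.2)]
  exact sub_le_self 1 hx.1

lemma supD_const (c : ℝ) : supD (fun _ => c) = |c| :=
  IsGreatest.csSup_eq ⟨⟨0, le_rfl, rfl⟩, by rintro _ ⟨t, -, rfl⟩; exact le_rfl⟩

lemma bddC2_const (c : ℝ) : BddC2 (fun _ => c) := ⟨contDiff_const, |c|, fun _ _ => le_rfl⟩

/-- when `μσ = 1`, the asymptotic gain of the displacement in the spatial
sup norm equals `1`: the constant `1` is an asymptotic-gain constant, and any
asymptotic-gain constant `γ` satisfies `γ ≥ 1`. -/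
theorem asymptotic_gain_sup_eq_one
    (σ μ : ℝ) (hσ : 0 < σ) (hμ : 0 ≤ μ) (hμσ : μ * σ = 1) :
    (∀ (d : ℝ → ℝ) (u : ℝ → ℝ → ℝ), BddC2 d → IsClassicalSolution σ μ d u →
      Filter.limsup (fun t => supNorm u t) Filter.atTop ≤ supD d) ∧
    (∀ γ : ℝ, 0 ≤ γ →
      (∀ (d : ℝ → ℝ) (u : ℝ → ℝ → ℝ), BddC2 d → IsClassicalSolution σ μ d u →
        Filter.limsup (fun t => supNorm u t) Filter.atTop ≤ γ * supD d) →
      1 ≤ γ) := by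
  refine ⟨fun d u hd hu => hu.limsup_supNorm_le hσ hμσ fun t ht => hd.abs_le_supD ht,
    fun γ _ hγ => ?_⟩
  have hgain := hγ _ _ (bddC2_const 1) (isClassicalSolution_one_sub σ μ)
  simpa only [supNorm_one_sub, limsup_const, supD_const, abs_one, mul_one] using hgain
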